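/- arXiv:2205.09567 — 2 statements merged into one kernel-verified Lean document; each statement's English description precedes it below -/
import Mathlib

section
/- (Markov brothers' inequality on a general interval.) Let d, k ∈ ℕ, let a < b be real numbers, and let p ∈ ℝ[X] be a polynomial of degree at most d. Then sup_{x ∈ [a,b]} |p^{(k)}(x)| ≤ (2/(b−a))^k · C_M(d,k) · sup_{x ∈ [a,b]} |p(x)|, where C_M(d,k) = (∏_{j=0}^{k−1} (d² − j²)) / (∏_{j=0}^{k−1} (2j+1)). -/
/-- The Markov constant `C_M(d,k) = d²(d²−1²)⋯(d²−(k−1)²)/(1·3·5⋯(2k−1))`. -/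
noncomputable def markovConst (d k : ℕ) : ℝ :=
  (∏ j ∈ Finset.range k, ((d : ℝ) ^ 2 - (j : ℝ) ^ 2)) /
    (∏ j ∈ Finset.range k, (2 * (j : ℝ) + 1))

/-!
Let `M` bound `|p|` on `[-1, 1]`; the claim there is `|p⁽ᵏ⁾| ≤ M · Tₙ⁽ᵏ⁾(1)`. Following Duffin and
Schaeffer, `p` is only used at the extremal points of the Chebyshev polynomial `Tₙ`, where
`Tₙ = ±1`. Interpolating there gives `|p'(ξ)| ≤ M |Tₙ'(ξ)|` at every zero `ξ` of `Tₙ`, because for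
`p = Tₙ` all terms of the interpolation formula have the same sign. Interpolating `p'` at the zeros
gives `|p⁽ᵏ⁾(x)| ≤ M · A⁽ᵏ⁾(0)`, where `Tₙ = c ∏ (X - ξ)` and `A = c ∏ (X + |x - ξ|)`.

To compare `A` with `B(z) = Tₙ(1 + z)`, observe that `|A(iy)| = |Tₙ(x + iy)| ≤ |Tₙ(1 + iy)|`; the
inequality holds because `|Tₙ(x + iy)|² - Tₙ(x)²` solves a second-order linear recurrence in `n`
whose kernel `Uₙ(2x² - 1)` is largest at `x = 1` and whose forcing term is increasing in the earlier
norms. Since the zeros of `B` lie in the left half-plane, `|A| ≤ |B|` holds on the right half-plane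
(Phragmén–Lindelöf), and such a bound is inherited by derivatives (Gauss–Lucas applied to
`B - λA` with `|λ| < 1`); hence `A⁽ᵏ⁾(0) ≤ B⁽ᵏ⁾(0) = Tₙ⁽ᵏ⁾(1)`.
-/

open Polynomial Finset Lagrange Complex ComplexConjugate Filter Bornology
open Polynomial.Chebyshev hiding C S

section Strip

lemma eval_T_add_two {R : Type*} [CommRing R] (x : R) (n : ℕ) :
    (T R (n + 2 : ℕ)).eval x = 2 * x * (T R (n + 1 : ℕ)).eval x - (T R n).eval x := by
  push_cast
  simp [T_add_two]

lemma eq_sum_antidiagonal_eval_U_mul {R : Type*} [CommRing R] {x : R} {a g : ℕ → R}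
    (h0 : a 0 = 0) (h1 : a 1 = g 0)
    (h : ∀ n, a (n + 2) = 2 * x * a (n + 1) - a n + g (n + 1)) (n : ℕ) :
    a (n + 1) = ∑ ij ∈ antidiagonal n, (U R ij.1).eval x * g ij.2 := by
  induction n using Nat.twoStepInduction with
  | zero => simp [h1]
  | one => simp [h, h0, h1, Nat.antidiagonal_succ]; ring
  | more n ih ih' =>
    have hU (i : ℕ) : (U R (i + 1 + 1 : ℤ)).eval x =
        2 * x * (U R (i + 1 : ℤ)).eval x - (U R i).eval x := by
      rw [add_assoc, one_add_one_eq_two, U_add_two]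
      simp
    rw [h, ih', ih]
    simp only [Nat.sum_antidiagonal_succ, Nat.cast_add, Nat.cast_one, hU, sub_mul, mul_assoc,
      sum_sub_distrib, ← mul_sum]
    simp
    ring

lemma abs_eval_U_le (n : ℕ) {x : ℝ} (hx : |x| ≤ 1) : |(U ℝ n).eval x| ≤ n + 1 := by
  have hn : (0 : ℝ) < n + 1 := by positivity
  have h := abs_iterate_derivative_T_real_le (n + 1 : ℤ) 1 hx
  simp only [Function.iterate_one, T_derivative_eq_U, add_sub_cancel_right, eval_mul, abs_mul,
    U_eval_one] at h
  simpa [abs_of_pos hn, hn] using h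

lemma abs_le_of_second_order_recurrence {x : ℝ} (hx : |x| ≤ 1) {a b f g : ℕ → ℝ}
    (ha0 : a 0 = 0) (ha1 : a 1 = f 0)
    (ha : ∀ n, a (n + 2) = 2 * x * a (n + 1) - a n + f (n + 1))
    (hb0 : b 0 = 0) (hb1 : b 1 = g 0)
    (hb : ∀ n, b (n + 2) = 2 * b (n + 1) - b n + g (n + 1))
    {n : ℕ} (hfg : ∀ j ≤ n, |f j| ≤ g j) : |a (n + 1)| ≤ b (n + 1) := by
  rw [eq_sum_antidiagonal_eval_U_mul ha0 ha1 ha,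
    eq_sum_antidiagonal_eval_U_mul hb0 hb1 (x := 1) (by simpa using hb)]
  refine (abs_sum_le_sum_abs _ _).trans (sum_le_sum fun ij hij => ?_)
  rw [abs_mul]
  gcongr
  · simp only [U_eval_one, Int.cast_natCast]; positivity
  · simpa using abs_eval_U_le ij.1 hx
  · exact hfg _ (Nat.le.intro ((add_comm _ _).trans (mem_antidiagonal.1 hij)))

/-- `‖Tₙ(z)‖²`, as a sequence in `n`; it is compared between points with the same imaginary part. -/
noncomputable def normSqT (z : ℂ) (n : ℕ) : ℝ := normSq ((T ℂ n).eval z)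

/-- `Im z · Im (Tₙ₊₁(z) · conj Tₙ(z))`: a cross term in the recurrence for `‖Tₙ(z)‖²`,
with the factor `Im z` making it nonnegative on both sides of the real axis. -/
noncomputable def crossImT (z : ℂ) (n : ℕ) : ℝ :=
  z.im * ((T ℂ (n + 1 : ℕ)).eval z * conj ((T ℂ n).eval z)).im

/-- The amount by which `‖Tₙ₊₁‖² + ‖Tₙ‖² - 2 Re z · Re (Tₙ₊₁ · conj Tₙ)` exceeds `1 - (Re z)²`
at `z`. It vanishes for real `z`; sums of two consecutive values drive the recurrence for
`‖Tₙ(z)‖²`. -/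
noncomputable def excessT (z : ℂ) (n : ℕ) : ℝ :=
  normSqT z (n + 1) + normSqT z n
    - 2 * z.re * ((T ℂ (n + 1 : ℕ)).eval z * conj ((T ℂ n).eval z)).re - (1 - z.re ^ 2)

variable (z : ℂ) (n : ℕ)

lemma crossImT_zero : crossImT z 0 = z.im ^ 2 := by
  simp [crossImT, sq]

lemma crossImT_succ : crossImT z (n + 1) = crossImT z n + 2 * z.im ^ 2 * normSqT z (n + 1) := by
  simp only [crossImT, normSqT, eval_T_add_two z n, mul_im, mul_re, sub_im, sub_re,
    conj_re, conj_im, normSq_apply, re_ofNat, im_ofNat]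
  ring

lemma excessT_zero : excessT z 0 = z.im ^ 2 := by
  simp [excessT, normSqT, normSq_apply]
  ring

lemma excessT_succ :
    excessT z (n + 1) = excessT z n + 4 * z.im ^ 2 * normSqT z (n + 1) + 4 * crossImT z n := by
  simp only [excessT, crossImT, normSqT, eval_T_add_two z n, mul_im, mul_re, sub_im, sub_re,
    conj_re, conj_im, normSq_apply, re_ofNat, im_ofNat]
  ring

lemma normSqT_add_two :
    normSqT z (n + 2) = 2 * (2 * z.re ^ 2 - 1) * normSqT z (n + 1) - normSqT z n +
      2 * (1 - z.re ^ 2) + (excessT z n + excessT z (n + 1)) := by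
  simp only [excessT, normSqT, eval_T_add_two z n, mul_im, mul_re, sub_im, sub_re,
    conj_re, conj_im, normSq_apply, re_ofNat, im_ofNat]
  ring

lemma normSqT_nonneg : 0 ≤ normSqT z n := normSq_nonneg _

lemma crossImT_nonneg : 0 ≤ crossImT z n := by
  induction n with
  | zero => rw [crossImT_zero]; positivity
  | succ n ih =>
    have := normSqT_nonneg z (n + 1)
    rw [crossImT_succ]; positivity

lemma excessT_nonneg : 0 ≤ excessT z n := by
  induction n with
  | zero => rw [excessT_zero]; positivity
  | succ n ih =>
    have := normSqT_nonneg z (n + 1)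
    have := crossImT_nonneg z n
    rw [excessT_succ]; positivity

variable {z n} {w : ℂ}

lemma crossImT_mono (him : z.im = w.im) (h : ∀ j ≤ n, normSqT z j ≤ normSqT w j) :
    crossImT z n ≤ crossImT w n := by
  induction n with
  | zero => simp [crossImT_zero, him]
  | succ n ih =>
    rw [crossImT_succ, crossImT_succ, him]
    gcongr
    exacts [ih fun j hj => h j (by lia), h _ le_rfl]

lemma excessT_mono (him : z.im = w.im) (h : ∀ j ≤ n, normSqT z j ≤ normSqT w j) :
    excessT z n ≤ excessT w n := by
  induction n with
  | zero => simp [excessT_zero, him]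
  | succ n ih =>
    rw [excessT_succ, excessT_succ, him]
    gcongr
    exacts [ih fun j hj => h j (by lia), h _ le_rfl, crossImT_mono him fun j hj => h j (by lia)]

lemma normSqT_ofReal (x : ℝ) (n : ℕ) : normSqT x n = (T ℝ n).eval x ^ 2 := by
  rw [normSqT, ← complex_ofReal_eval_T, normSq_ofReal, sq]

lemma excessT_ofReal (x : ℝ) (n : ℕ) : excessT x n = 0 := by
  induction n with
  | zero => simp [excessT_zero]
  | succ n ih => simp [excessT_succ, ih, crossImT]

lemma normSqT_sub_add_two (z : ℂ) (n : ℕ) :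
    normSqT z (n + 2) - normSqT z.re (n + 2) =
      2 * (2 * z.re ^ 2 - 1) * (normSqT z (n + 1) - normSqT z.re (n + 1)) -
        (normSqT z n - normSqT z.re n) + (excessT z n + excessT z (n + 1)) := by
  rw [normSqT_add_two, normSqT_add_two, excessT_ofReal, excessT_ofReal, ofReal_re]
  ring

lemma normSqT_sub_re_le_normSqT_sub_one (hre : |z.re| ≤ 1) (him : z.im = w.im)
    (hw : w.re = 1) (h : ∀ j ≤ n, normSqT z j ≤ normSqT w j) :
    normSqT z (n + 1) - normSqT z.re (n + 1) ≤ normSqT w (n + 1) - normSqT w.re (n + 1) := by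
  let forcing (u : ℂ) : ℕ → ℝ
    | 0 => u.im ^ 2
    | m + 1 => excessT u m + excessT u (m + 1)
  have hx : |2 * z.re ^ 2 - 1| ≤ 1 := by
    rw [abs_le]
    constructor <;> linarith [sq_nonneg z.re, (sq_le_one_iff_abs_le_one z.re).2 hre]
  have hforcing : ∀ j ≤ n, |forcing z j| ≤ forcing w j := by
    rintro (_ | j) hj
    · simp [forcing, him]
    · rw [abs_of_nonneg (add_nonneg (excessT_nonneg ..) (excessT_nonneg ..))]
      exact add_le_add (excessT_mono him fun i hi => h i (by lia))
        (excessT_mono him fun i hi => h i (by lia))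
  refine (le_abs_self _).trans <| abs_le_of_second_order_recurrence hx
    (a := fun m => normSqT z m - normSqT z.re m) (b := fun m => normSqT w m - normSqT w.re m)
    ?_ ?_ (normSqT_sub_add_two z) ?_ ?_ (fun m => ?_) hforcing
  · simp [normSqT]
  · simp [forcing, normSqT, normSq_apply]; ring
  · simp [normSqT]
  · simp [forcing, normSqT, normSq_apply]; ring
  · simpa [hw, show (2 - 1 : ℝ) = 1 by norm_num] using normSqT_sub_add_two w m

lemma normSqT_le_normSqT (hre : |z.re| ≤ 1) (him : z.im = w.im) (hw : w.re = 1) (n : ℕ) :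
    normSqT z n ≤ normSqT w n := by
  induction n using Nat.strong_induction_on with
  | _ n ih =>
  rcases n with _ | n
  · simp [normSqT]
  have hreal : normSqT z.re (n + 1) ≤ normSqT w.re (n + 1) := by
    rw [normSqT_ofReal, normSqT_ofReal, hw, T_eval_one, one_pow, sq_le_one_iff_abs_le_one]
    exact abs_eval_T_real_le_one _ hre
  have hdefect := normSqT_sub_re_le_normSqT_sub_one hre him hw (n := n) fun j hj => ih j (by lia)
  linarith

theorem norm_eval_T_add_mul_I_le {x : ℝ} (hx : |x| ≤ 1) (y : ℝ) (n : ℕ) :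
    ‖(T ℂ n).eval (x + y * I)‖ ≤ ‖(T ℂ n).eval (1 + y * I)‖ := by
  rw [norm_def, norm_def]
  exact Real.sqrt_le_sqrt (normSqT_le_normSqT (by simpa) (by simp) (by simp) n)

end Strip

section HalfPlane

lemma eval_derivative_ne_zero_of_zero_le_re {p : ℂ[X]} (hp : 0 < p.degree)
    (h : ∀ z : ℂ, 0 ≤ z.re → p.eval z ≠ 0) {z : ℂ} (hz : 0 ≤ z.re) :
    p.derivative.eval z ≠ 0 := by
  intro hpz
  have hroots : p.rootSet ℂ ⊆ {w | w.re < 0} := fun w hw => by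
    rw [mem_rootSet, coe_aeval_eq_eval] at hw
    by_contra! hre
    exact h w (not_lt.1 hre) hw.2
  have hp' : p.derivative ≠ 0 := by
    rwa [Ne, derivative_eq_zero, natDegree_eq_zero_iff_degree_le_zero, not_le]
  have hz' := convexHull_min hroots (convex_halfSpace_re_lt 0)
    (rootSet_derivative_subset_convexHull_rootSet hp (mem_rootSet.2 ⟨hp', by simpa⟩))
  exact hz.not_gt hz'

variable {f g : ℂ[X]}

lemma norm_eval_le_of_norm_eval_mul_I_le (hdeg : f.natDegree ≤ g.natDegree)
    (hg : ∀ z : ℂ, 0 ≤ z.re → g.eval z ≠ 0)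
    (hfg : ∀ y : ℝ, ‖f.eval (y * I)‖ ≤ ‖g.eval (y * I)‖) {z : ℂ} (hz : 0 ≤ z.re) :
    ‖f.eval z‖ ≤ ‖g.eval z‖ := by
  have hdeg' : f.degree ≤ g.degree := by
    have hg0 : g ≠ 0 := fun h => hg 0 le_rfl (by simp [h])
    exact (degree_le_of_natDegree_le hdeg).trans_eq (degree_eq_natDegree hg0).symm
  let q (w : ℂ) : ℂ := f.eval w / g.eval w
  have hbdd : q =O[cobounded ℂ] fun _ => (1 : ℝ) := by
    simp only [q, div_eq_mul_inv]
    exact ((isBigO_cobounded_of_degree_le hdeg').mul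
      (Asymptotics.isBigO_refl (fun w => (g.eval w)⁻¹) _)).trans
      (.of_norm_le fun w => by simpa using mul_inv_le_one)
  have hdiff : DiffContOnCl ℂ q {w | 0 < w.re} := by
    refine DifferentiableOn.diffContOnCl ?_
    rw [closure_setOfPred_lt_re]
    exact f.differentiable.differentiableOn.div g.differentiable.differentiableOn hg
  have hq (w : ℂ) (hw : 0 ≤ w.re) : ‖q w‖ ≤ 1 ↔ ‖f.eval w‖ ≤ ‖g.eval w‖ := by
    rw [norm_div, div_le_one₀ (norm_pos_iff.2 (hg w hw))]
  refine (hq z hz).1 <| PhragmenLindelof.right_half_plane_of_bounded_on_real hdiff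
    ⟨1, one_lt_two, 0, ?_⟩ ?_ (fun y => (hq _ (by simp)).2 (hfg y)) hz
  · simpa using hbdd.mono inf_le_left
  · have h := hbdd.comp_tendsto (k := ((↑) : ℝ → ℂ)) (l' := atTop)
      (by simpa [← tendsto_norm_atTop_iff_cobounded] using tendsto_abs_atTop_atTop)
    exact (Asymptotics.isBigO_one_iff ℝ).1 h

lemma norm_eval_derivative_le_of_norm_eval_le (hdeg : 0 < g.degree)
    (hg : ∀ z : ℂ, 0 ≤ z.re → g.eval z ≠ 0)
    (hfg : ∀ z : ℂ, 0 ≤ z.re → ‖f.eval z‖ ≤ ‖g.eval z‖) {z : ℂ} (hz : 0 ≤ z.re) :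
    ‖f.derivative.eval z‖ ≤ ‖g.derivative.eval z‖ := by
  by_contra! hlt
  have hf' : 0 < ‖f.derivative.eval z‖ := (norm_nonneg _).trans_lt hlt
  -- `g - c f` has no zeros in the half-plane, but its derivative vanishes at `z`.
  set c := g.derivative.eval z / f.derivative.eval z with hc
  have hc1 : ‖c‖ < 1 := by rwa [hc, norm_div, div_lt_one₀ hf']
  have hbound (w : ℂ) (hw : 0 ≤ w.re) : (1 - ‖c‖) * ‖g.eval w‖ ≤ ‖(g - C c * f).eval w‖ := by
    calc (1 - ‖c‖) * ‖g.eval w‖ ≤ ‖g.eval w‖ - ‖c‖ * ‖f.eval w‖ := by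
          nlinarith [hfg w hw, norm_nonneg c]
      _ ≤ ‖(g - C c * f).eval w‖ := by
          simpa using norm_sub_norm_le (g.eval w) (c * f.eval w)
  have hne (w : ℂ) (hw : 0 ≤ w.re) : (g - C c * f).eval w ≠ 0 :=
    norm_pos_iff.1 <| (mul_pos (sub_pos.2 hc1) (norm_pos_iff.2 (hg w hw))).trans_le (hbound w hw)
  have hdeg' : 0 < (g - C c * f).degree := by
    by_contra! hle
    rw [eq_C_of_degree_le_zero hle] at hbound
    have htendsto := tendsto_norm_atTop g hdeg (z := fun x : ℝ => (x : ℂ)) (l := atTop)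
      (by simpa using tendsto_abs_atTop_atTop)
    obtain ⟨x, hx, hx0⟩ := ((htendsto.const_mul_atTop (sub_pos.2 hc1)).eventually_gt_atTop
      ‖(g - C c * f).coeff 0‖ |>.and (eventually_ge_atTop 0)).exists
    exact hx.not_ge (by simpa using hbound x (by simpa))
  refine eval_derivative_ne_zero_of_zero_le_re hdeg' hne hz ?_
  simp [hc, norm_pos_iff.1 hf']

lemma norm_eval_iterate_derivative_le_of_norm_eval_le (hdeg : f.natDegree ≤ g.natDegree)
    (hg : ∀ z : ℂ, 0 ≤ z.re → g.eval z ≠ 0)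
    (hfg : ∀ z : ℂ, 0 ≤ z.re → ‖f.eval z‖ ≤ ‖g.eval z‖) (k : ℕ) {z : ℂ} (hz : 0 ≤ z.re) :
    ‖(derivative^[k] f).eval z‖ ≤ ‖(derivative^[k] g).eval z‖ := by
  induction k generalizing f g with
  | zero => exact hfg z hz
  | succ k ih =>
    rcases Nat.eq_zero_or_pos g.natDegree with hg0 | hg0
    · rw [iterate_derivative_eq_zero (by lia)]
      simp
    · have hgdeg := natDegree_pos_iff_degree_pos.1 hg0
      refine ih ?_ (fun w => eval_derivative_ne_zero_of_zero_le_re hgdeg hg)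
        fun w => norm_eval_derivative_le_of_norm_eval_le hgdeg hg hfg
      rw [natDegree_derivative g]
      exact (natDegree_derivative_le f).trans (by lia)

end HalfPlane

section Nodal

lemma eq_C_leadingCoeff_mul_nodal {F ι : Type*} [Field F] {s : Finset ι} {v : ι → F} {q : F[X]}
    (hvs : Set.InjOn v s) (hdeg : q.degree = #s) (hq : ∀ i ∈ s, q.eval (v i) = 0) :
    q = C q.leadingCoeff * nodal s v := by
  have hq0 : q ≠ 0 := degree_ne_bot.1 (by simp [hdeg])
  refine eq_of_degree_sub_lt_of_eval_index_eq s hvs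
    (hdeg ▸ degree_sub_lt_left ?_ hq0 ?_) fun i hi => ?_
  · rw [degree_C_mul (leadingCoeff_ne_zero.2 hq0), degree_nodal, hdeg]
  · simp [leadingCoeff_mul, nodal_monic.leadingCoeff]
  · simp [hq i hi, eval_nodal_at_node hi]

lemma sub_sq_mul_eval_derivative_nodal_erase {R ι : Type*} [CommRing R] [DecidableEq ι]
    {s : Finset ι} {i : ι} (hi : i ∈ s) (v : ι → R) (x : R) :
    (x - v i) ^ 2 * (derivative (nodal (s.erase i) v)).eval x =
      (x - v i) * (derivative (nodal s v)).eval x - (nodal s v).eval x := by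
  simp [nodal_eq_mul_nodal_erase hi, derivative_mul]
  ring

lemma eval_derivative_eq_sum {F ι : Type*} [Field F] [DecidableEq ι] {s : Finset ι} {v : ι → F}
    {p : F[X]} (hvs : Set.InjOn v s) (hp : p.degree < #s) (x : F) :
    (derivative p).eval x =
      ∑ i ∈ s, p.eval (v i) * (nodalWeight s v i * (derivative (nodal (s.erase i) v)).eval x) := by
  conv_lhs => rw [eq_interpolate hvs hp, interpolate_eq_sum]
  simp [eval_finsetSum, nodalWeight, nodal, div_eq_mul_inv, mul_assoc]

end Nodal

lemma abs_sum_mul_le_of_mul_nonneg {ι : Type*} {s : Finset ι} {u v b : ι → ℝ} {M c : ℝ}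
    (hc : c ≠ 0) (huv : ∀ i ∈ s, |u i| ≤ M * |v i|) (hvb : ∀ i ∈ s, 0 ≤ c * (v i * b i)) :
    |∑ i ∈ s, u i * b i| ≤ M * |∑ i ∈ s, v i * b i| := by
  have hsum : ∑ i ∈ s, |v i * b i| = |∑ i ∈ s, v i * b i| := by
    refine mul_left_cancel₀ (abs_ne_zero.2 hc) ?_
    rw [← abs_mul, mul_sum, mul_sum, abs_sum_of_nonneg hvb]
    exact sum_congr rfl fun i hi => by rw [← abs_mul, abs_of_nonneg (hvb i hi)]
  rw [← hsum, mul_sum]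
  refine (abs_sum_le_sum_abs _ _).trans (sum_le_sum fun i hi => ?_)
  rw [abs_mul, abs_mul, ← mul_assoc]
  gcongr
  exact huv i hi

section Bernstein

variable {n i : ℕ} {x : ℝ}

lemma eval_derivative_T_ne_zero (hx : (T ℝ n).eval x = 0) : (derivative (T ℝ n)).eval x ≠ 0 := by
  intro hx'
  have hlt := (one_lt_rootMultiplicity_iff_isRoot (T_ne_zero ℝ n)).2 ⟨hx, hx'⟩
  rw [← count_roots, roots_T_real] at hlt
  exact hlt.not_ge (Multiset.nodup_iff_count_le_one.1 (Finset.nodup _) x)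

lemma X_sq_sub_one_mul_derivative_T_eval_node (hi : i ≤ n) :
    ((X ^ 2 - 1) * derivative (T ℝ n)).eval (node n i) = 0 := by
  rcases Nat.eq_zero_or_pos i with rfl | hi0
  · simp [node_eq_one]
  rcases hi.eq_or_lt with rfl | hin
  · simp [node_eq_neg_one hi0.ne']
  · have h := (isLocalExtr_T_real (by lia) hi0 hin).deriv_eq_zero
    rw [Polynomial.deriv] at h
    simp [node, h]

lemma exists_X_sq_sub_one_mul_derivative_T_eq (hn : n ≠ 0) :
    ∃ c : ℝ, c ≠ 0 ∧ (X ^ 2 - 1) * derivative (T ℝ n) = C c * nodal (range (n + 1)) (node n) := by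
  have hdeg : ((X ^ 2 - 1) * derivative (T ℝ n)).degree =
      ((#(range (n + 1)) : ℕ) : WithBot ℕ) := by
    have hsq : (X ^ 2 - 1 : ℝ[X]).degree = 2 := degree_X_pow_sub_C two_pos 1
    rw [degree_mul, hsq, degree_derivative (by simpa), natDegree_T, Int.natAbs_natCast, card_range]
    norm_cast
    lia
  refine ⟨_, leadingCoeff_ne_zero.2 (degree_ne_bot.1 (by simp [hdeg])),
    eq_C_leadingCoeff_mul_nodal (strictAntiOn_node n).injOn hdeg fun i hi => ?_⟩
  exact X_sq_sub_one_mul_derivative_T_eval_node (mem_range_succ_iff.1 hi)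

lemma derivative_X_sq_sub_one_mul_derivative_T (R : Type*) [CommRing R] (n : ℤ) :
    derivative ((X ^ 2 - 1) * derivative (T R n)) =
      X * derivative (T R n) + (n : R[X]) ^ 2 * T R n := by
  have h := one_sub_X_sq_mul_derivative_derivative_T_eq_poly_in_T (R := R) n
  simp only [Function.iterate_succ_apply, Function.iterate_zero, id_eq] at h
  simp only [derivative_mul, derivative_sub, derivative_X_pow, derivative_one, Nat.cast_ofNat,
    map_ofNat, sub_zero, Nat.add_one_sub_one, pow_one]
  linear_combination -h

lemma abs_le_one_of_eval_T_eq_zero (hx : (T ℝ n).eval x = 0) : |x| ≤ 1 := by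
  by_contra! h
  have := one_le_abs_eval_T_real n h.le
  norm_num [hx] at this

lemma mul_eval_derivative_nodal_erase_nonneg {c : ℝ}
    (hc : (X ^ 2 - 1) * derivative (T ℝ n) = C c * nodal (range (n + 1)) (node n))
    (hx : (T ℝ n).eval x = 0) (hi : i ≤ n) :
    0 ≤ c * (derivative (T ℝ n)).eval x *
      (derivative (nodal ((range (n + 1)).erase i) (node n))).eval x := by
  set D := (derivative (T ℝ n)).eval x
  set t := node n i
  have hne : x - t ≠ 0 := sub_ne_zero.2 fun h => by
    have ht := eval_T_real_node (mem_Iic.2 hi)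
    rw [← show x = node n i from h, hx] at ht
    exact pow_ne_zero i (by norm_num) ht.symm
  have hnodal := congr(($hc).eval x)
  have hnodal' := congr((derivative $hc).eval x)
  rw [derivative_X_sq_sub_one_mul_derivative_T] at hnodal'
  simp only [eval_mul, eval_add, derivative_C_mul, eval_C, eval_X, eval_sub, eval_pow, eval_one,
    hx] at hnodal hnodal'
  refine nonneg_of_mul_nonneg_right (a := (x - t) ^ 2) ?_ (by positivity)
  -- At a zero of `Tₙ` the Chebyshev differential equation gives `x D` for the derivative of
  -- `c · nodal`, hence the factor `1 - x t`.
  calc 0 ≤ D ^ 2 * (1 - x * t) := by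
        have hxt : |x * t| ≤ 1 := by
          rw [abs_mul]
          exact mul_le_one₀ (abs_le_one_of_eval_T_eq_zero hx) (abs_nonneg _)
            (abs_le.2 node_mem_Icc)
        exact mul_nonneg (sq_nonneg D) (sub_nonneg.2 (le_of_abs_le hxt))
    _ = (x - t) ^ 2 * _ := by
        have herase := sub_sq_mul_eval_derivative_nodal_erase (mem_range_succ_iff.2 hi) (node n) x
        linear_combination (x - t) * D * hnodal' - D * hnodal - c * D * herase

lemma eval_T_node_mul_nodalWeight_pos (hi : i ≤ n) :
    0 < (T ℝ n).eval (node n i) * nodalWeight (range (n + 1)) (node n) i := by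
  have h := inv_pos.2 (zero_lt_prod_node_sub_node hi)
  rw [eval_T_real_node (mem_Iic.2 hi), nodalWeight, prod_inv_distrib]
  rwa [mul_inv, ← inv_pow, inv_neg_one] at h

theorem abs_eval_derivative_le_of_eval_T_eq_zero {p : ℝ[X]} (hp : p.natDegree ≤ n) {M : ℝ}
    (hM : ∀ i ≤ n, |p.eval (node n i)| ≤ M) (hx : (T ℝ n).eval x = 0) :
    |(derivative p).eval x| ≤ M * |(derivative (T ℝ n)).eval x| := by
  have hn : n ≠ 0 := by rintro rfl; simp at hx
  obtain ⟨c, hc0, hc⟩ := exists_X_sq_sub_one_mul_derivative_T_eq hn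
  have hdeg {q : ℝ[X]} (hq : q.natDegree ≤ n) : q.degree < #(range (n + 1)) := by
    rw [card_range]
    exact (degree_le_of_natDegree_le hq).trans_lt (by exact_mod_cast n.lt_succ_self)
  have hinj := (strictAntiOn_node n).injOn
  rw [eval_derivative_eq_sum hinj (hdeg hp),
    eval_derivative_eq_sum hinj (hdeg (natDegree_T ℝ n).le)]
  refine abs_sum_mul_le_of_mul_nonneg (mul_ne_zero hc0 (eval_derivative_T_ne_zero hx))
    (fun i hi => ?_) fun i hi => ?_
  · have hi := mem_range_succ_iff.1 hi
    simpa [eval_T_real_node (mem_Iic.2 hi)] using hM i hi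
  · have hi := mem_range_succ_iff.1 hi
    have hweight := eval_T_node_mul_nodalWeight_pos hi
    have hnodal := mul_eval_derivative_nodal_erase_nonneg hc hx hi
    linarith [mul_nonneg hweight.le hnodal]

end Bernstein

section Majorant

lemma natDegree_finsetProd_X_add_C {R ι : Type*} [CommRing R] [Nontrivial R] (s : Finset ι)
    (c : ι → R) : (∏ i ∈ s, (X + C (c i))).natDegree = #s := by
  simp [natDegree_prod_of_monic _ _ fun i _ => monic_X_add_C (c i)]

lemma eval_zero_iterate_derivative_prod_X_add_C {R ι : Type*} [CommRing R] [DecidableEq ι]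
    (s : Finset ι) (c : ι → R) {k : ℕ} (hk : k < #s) :
    (derivative^[k + 1] (∏ i ∈ s, (X + C (c i)))).eval 0 =
      k.factorial * ∑ i ∈ s, ∑ t ∈ (s.erase i).powersetCard (#s - (k + 1)), ∏ a ∈ t, c a := by
  rw [Function.iterate_succ_apply, derivative_prod_finset, iterate_derivative_sum, eval_finsetSum,
    mul_sum]
  refine sum_congr rfl fun i hi => ?_
  rw [← coeff_zero_eq_eval_zero, coeff_iterate_derivative, zero_add, Nat.descFactorial_self,
    derivative_add, derivative_X, derivative_C, add_zero, mul_one,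
    prod_X_add_C_coeff _ _ (by rw [card_erase_of_mem hi]; lia), card_erase_of_mem hi,
    nsmul_eq_mul, Nat.sub_sub, add_comm 1]

lemma abs_eval_iterate_derivative_le_mul_eval_zero_prod {ι : Type*} {s : Finset ι} {v : ι → ℝ}
    (hvs : Set.InjOn v s) {q : ℝ[X]} (hq : q.degree < #s) {M : ℝ}
    (hM : ∀ i ∈ s, |q.eval (v i)| ≤ M * |(derivative (nodal s v)).eval (v i)|) (k : ℕ) (x : ℝ) :
    |(derivative^[k] q).eval x| ≤
      M * (derivative^[k + 1] (∏ i ∈ s, (X + C |x - v i|))).eval 0 := by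
  classical
  rcases lt_or_ge k #s with hk | hk
  · rw [eval_iterate_derivative_eq_sum hvs hq hk, eval_zero_iterate_derivative_prod_X_add_C _ _ hk,
      abs_mul, Nat.abs_cast, mul_left_comm, mul_sum]
    gcongr
    refine (abs_sum_le_sum_abs _ _).trans (sum_le_sum fun i hi => ?_)
    have hprod : |q.eval (v i) / ∏ j ∈ s.erase i, (v i - v j)| ≤ M := by
      have hne : ∏ j ∈ s.erase i, (v i - v j) ≠ 0 := prod_ne_zero_iff.2 fun j hj =>
        sub_ne_zero.2 fun h => ne_of_mem_erase hj (hvs (mem_of_mem_erase hj) hi h.symm)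
      rw [abs_div, div_le_iff₀ (abs_pos.2 hne)]
      simpa only [eval_nodal_derivative_eval_node_eq hi, eval_nodal] using hM i hi
    rw [abs_mul]
    refine mul_le_mul hprod ?_ (abs_nonneg _) ((abs_nonneg _).trans hprod)
    exact (abs_sum_le_sum_abs _ _).trans_eq (sum_congr rfl fun t _ => abs_prod ..)
  · rw [iterate_derivative_eq_zero_of_degree_lt (hq.trans_le (by exact_mod_cast hk)),
      iterate_derivative_eq_zero (by rw [natDegree_finsetProd_X_add_C]; lia)]
    simp

end Majorant

section DuffinSchaeffer

lemma iterate_derivative_comp_C_mul_X_add_C {R : Type*} [CommSemiring R] (p : R[X]) (α β : R)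
    (k : ℕ) : derivative^[k] (p.comp (C α * X + C β)) =
      C (α ^ k) * (derivative^[k] p).comp (C α * X + C β) := by
  induction k with
  | zero => simp
  | succ k ih =>
    rw [Function.iterate_succ_apply', ih, Function.iterate_succ_apply', derivative_C_mul,
      derivative_comp]
    simp [pow_succ, mul_assoc]

lemma card_roots_toFinset_T (n : ℕ) : #(T ℝ n).roots.toFinset = n := by
  rw [roots_T_real, val_toFinset, card_image_of_injOn, card_range]
  exact (range n).nodup_map_iff_injOn.1 (roots_T_real_nodup n)

lemma T_eq_C_leadingCoeff_mul_nodal (n : ℕ) :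
    T ℝ n = C (T ℝ n).leadingCoeff * nodal (T ℝ n).roots.toFinset id :=
  eq_C_leadingCoeff_mul_nodal Function.injective_id.injOn (by simp [card_roots_toFinset_T])
    fun ξ hξ => isRoot_of_mem_roots (Multiset.mem_toFinset.1 hξ)

lemma eval_T_complex_eq_prod (n : ℕ) (z : ℂ) :
    (T ℂ n).eval z = (T ℝ n).leadingCoeff * ∏ ξ ∈ (T ℝ n).roots.toFinset, (z - ξ) := by
  rw [← map_T ofRealHom]
  conv_lhs => rw [T_eq_C_leadingCoeff_mul_nodal]
  simp [nodal, Polynomial.map_prod, eval_prod]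

lemma eval_T_complex_ne_zero (n : ℕ) {z : ℂ} (hz : 1 ≤ z.re) : (T ℂ n).eval z ≠ 0 := by
  intro h0
  obtain ⟨ξ, rfl⟩ : ∃ ξ : ℝ, z = ξ := by
    rw [eval_T_complex_eq_prod, mul_eq_zero, or_iff_right (by simp), prod_eq_zero_iff] at h0
    obtain ⟨ξ, -, hξ⟩ := h0
    exact ⟨ξ, sub_eq_zero.1 hξ⟩
  have hξ : (T ℝ n).eval ξ = 0 := by exact_mod_cast h0
  have := one_le_abs_eval_T_real n (hz.trans (le_abs_self ξ))
  norm_num [hξ] at this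

/-- The polynomial `c ∏ (X + |x - ξ|)`, over the zeros `ξ` of `Tₙ = c ∏ (X - ξ)`; its derivatives
at `0` bound those at `x` of any polynomial dominated by `Tₙ` at the extremal points. -/
noncomputable def chebyshevMajorant (n : ℕ) (x : ℝ) : ℝ[X] :=
  C (T ℝ n).leadingCoeff * ∏ ξ ∈ (T ℝ n).roots.toFinset, (X + C |x - ξ|)

lemma natDegree_chebyshevMajorant_le (n : ℕ) (x : ℝ) : (chebyshevMajorant n x).natDegree ≤ n := by
  refine (natDegree_C_mul_le _ _).trans ?_
  rw [natDegree_finsetProd_X_add_C, card_roots_toFinset_T]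

lemma norm_eval_chebyshevMajorant_mul_I (n : ℕ) (x y : ℝ) :
    ‖((chebyshevMajorant n x).map ofRealHom).eval (y * I)‖ = ‖(T ℂ n).eval (x + y * I)‖ := by
  have habs (ξ : ℝ) : ‖y * I + |x - ξ|‖ = ‖x + y * I - ξ‖ := by
    rw [norm_def, norm_def]
    simp [normSq_apply]
  simp [chebyshevMajorant, eval_T_complex_eq_prod, Polynomial.map_prod, eval_prod, habs]

lemma abs_eval_zero_iterate_derivative_chebyshevMajorant_le (n k : ℕ) {x : ℝ} (hx : |x| ≤ 1) :
    |(derivative^[k] (chebyshevMajorant n x)).eval 0| ≤ (derivative^[k] (T ℝ n)).eval 1 := by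
  set f : ℂ[X] := (chebyshevMajorant n x).map ofRealHom with hf
  set g : ℂ[X] := (T ℂ n).comp (C 1 * X + C 1)
  have hgeval (z : ℂ) : g.eval z = (T ℂ n).eval (1 + z) := by simp [g, add_comm]
  have hdeg : f.natDegree ≤ g.natDegree := by
    refine natDegree_map_le.trans ((natDegree_chebyshevMajorant_le n x).trans_eq ?_)
    rw [natDegree_comp, natDegree_linear one_ne_zero, natDegree_T, Int.natAbs_natCast, mul_one]
  have hne (z : ℂ) (hz : 0 ≤ z.re) : g.eval z ≠ 0 := by
    rw [hgeval]
    exact eval_T_complex_ne_zero n (by simpa)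
  have haxis (y : ℝ) : ‖f.eval (y * I)‖ ≤ ‖g.eval (y * I)‖ := by
    rw [hf, norm_eval_chebyshevMajorant_mul_I, hgeval]
    exact norm_eval_T_add_mul_I_le hx y n
  have h := norm_eval_iterate_derivative_le_of_norm_eval_le hdeg hne
    (fun z => norm_eval_le_of_norm_eval_mul_I_le hdeg hne haxis) k (z := (0 : ℝ)) le_rfl
  have hnorm (q : ℝ[X]) (t : ℝ) : ‖(q.map ofRealHom).eval (t : ℂ)‖ = |q.eval t| := by
    rw [← ofRealHom_eq_coe, eval_map_apply, ofRealHom_eq_coe, norm_real, Real.norm_eq_abs]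
  calc |(derivative^[k] (chebyshevMajorant n x)).eval 0|
      = ‖(derivative^[k] f).eval ((0 : ℝ) : ℂ)‖ := by rw [iterate_derivative_map, hnorm]
    _ ≤ ‖(derivative^[k] g).eval ((0 : ℝ) : ℂ)‖ := h
    _ = |(derivative^[k] (T ℝ n)).eval 1| := by
        rw [iterate_derivative_comp_C_mul_X_add_C, ← map_T ofRealHom, iterate_derivative_map,
          ← hnorm]
        simp
    _ = (derivative^[k] (T ℝ n)).eval 1 :=
        abs_of_nonneg ((abs_nonneg _).trans (abs_iterate_derivative_T_real_le n k (abs_one.le)))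

theorem abs_eval_iterate_derivative_succ_le_of_abs_eval_node_le {n : ℕ} {p : ℝ[X]}
    (hp : p.natDegree ≤ n) {M : ℝ} (hM : ∀ i ≤ n, |p.eval (node n i)| ≤ M) (k : ℕ) {x : ℝ}
    (hx : |x| ≤ 1) :
    |(derivative^[k + 1] p).eval x| ≤ M * (derivative^[k + 1] (T ℝ n)).eval 1 := by
  have hM0 : 0 ≤ M := (abs_nonneg _).trans (hM 0 n.zero_le)
  rcases Nat.eq_zero_or_pos n with rfl | hn
  · rw [eq_C_of_natDegree_eq_zero (Nat.le_zero.1 hp)]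
    simp
  have hdeg : (derivative p).degree < #(T ℝ n).roots.toFinset := by
    have hlt : (derivative p).natDegree < n := (natDegree_derivative_le p).trans_lt (by lia)
    rw [card_roots_toFinset_T]
    exact degree_le_natDegree.trans_lt (by exact_mod_cast hlt)
  have hlead : 0 < (T ℝ n).leadingCoeff := by simp
  have hnodes : ∀ ξ ∈ (T ℝ n).roots.toFinset, |(derivative p).eval (id ξ)| ≤
      M * (T ℝ n).leadingCoeff *
        |(derivative (nodal (T ℝ n).roots.toFinset id)).eval (id ξ)| := fun ξ hξ => by
    have h := abs_eval_derivative_le_of_eval_T_eq_zero hp hM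
      (isRoot_of_mem_roots (Multiset.mem_toFinset.1 hξ))
    conv_rhs at h => rw [T_eq_C_leadingCoeff_mul_nodal]
    rwa [derivative_C_mul, eval_mul, eval_C, abs_mul, abs_of_pos hlead, ← mul_assoc] at h
  calc |(derivative^[k] (derivative p)).eval x|
      ≤ M * (derivative^[k + 1] (chebyshevMajorant n x)).eval 0 := by
        rw [chebyshevMajorant, iterate_derivative_C_mul, eval_mul, eval_C, ← mul_assoc]
        exact abs_eval_iterate_derivative_le_mul_eval_zero_prod Function.injective_id.injOn hdeg
          hnodes k x
    _ ≤ M * (derivative^[k + 1] (T ℝ n)).eval 1 := by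
        gcongr
        exact (le_abs_self _).trans
          (abs_eval_zero_iterate_derivative_chebyshevMajorant_le n (k + 1) hx)

theorem abs_eval_iterate_derivative_le_markovConst {n : ℕ} {p : ℝ[X]} (hp : p.natDegree ≤ n) {M : ℝ}
    (hM : ∀ x ∈ Set.Icc (-1) 1, |p.eval x| ≤ M) (k : ℕ) {x : ℝ} (hx : x ∈ Set.Icc (-1) 1) :
    |(derivative^[k] p).eval x| ≤ M * markovConst n k := by
  rcases k with _ | k
  · simpa [markovConst] using hM x hx
  · have h := abs_eval_iterate_derivative_succ_le_of_abs_eval_node_le hp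
      (fun i _ => hM _ node_mem_Icc) k (abs_le.2 hx)
    rw [iterate_derivative_T_eval_one_eq_div] at h
    simpa [markovConst] using h

theorem abs_eval_iterate_derivative_le_on_Icc {d : ℕ} {a b : ℝ} (hab : a < b) {p : ℝ[X]}
    (hp : p.natDegree ≤ d) {M : ℝ} (hM : ∀ x ∈ Set.Icc a b, |p.eval x| ≤ M) (k : ℕ) {x : ℝ}
    (hx : x ∈ Set.Icc a b) :
    |(derivative^[k] p).eval x| ≤ (2 / (b - a)) ^ k * markovConst d k * M := by
  set α := (b - a) / 2 with hα
  set β := (a + b) / 2 with hβ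
  have hα0 : 0 < α := by linarith
  have hq : (p.comp (C α * X + C β)).natDegree ≤ d :=
    natDegree_comp_le.trans (by rwa [natDegree_linear hα0.ne', mul_one])
  have hqM (y : ℝ) (hy : y ∈ Set.Icc (-1) 1) : |(p.comp (C α * X + C β)).eval y| ≤ M := by
    rw [eval_comp]
    refine hM _ ?_
    simp only [eval_add, eval_mul, eval_C, eval_X]
    constructor <;> nlinarith [hy.1, hy.2]
  have hy : (x - β) / α ∈ Set.Icc (-1) 1 := by
    rw [Set.mem_Icc, le_div_iff₀ hα0, div_le_iff₀ hα0]
    constructor <;> linarith [hx.1, hx.2]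
  have h := abs_eval_iterate_derivative_le_markovConst hq hqM k hy
  have heval : (C α * X + C β).eval ((x - β) / α) = x := by
    simp [mul_div_cancel₀ _ hα0.ne']
  rw [iterate_derivative_comp_C_mul_X_add_C, eval_mul, eval_C, eval_comp, heval, abs_mul,
    abs_of_pos (pow_pos hα0 k), mul_comm M] at h
  rwa [← inv_div, ← hα, inv_pow, mul_assoc, le_inv_mul_iff₀ (pow_pos hα0 k)]

end DuffinSchaeffer

/-- Markov brothers' inequality on a general interval `[a,b]`. -/
theorem markov_brothers_inequality_interval (d k : ℕ) (a b : ℝ) (hab : a < b)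
    (p : Polynomial ℝ) (hp : p.natDegree ≤ d) :
    sSup ((fun x => |(Polynomial.derivative^[k] p).eval x|) '' Set.Icc a b) ≤
      (2 / (b - a)) ^ k * markovConst d k *
        sSup ((fun x => |p.eval x|) '' Set.Icc a b) := by
  have hbdd : BddAbove ((fun x => |p.eval x|) '' Set.Icc a b) :=
    (isCompact_Icc.image p.continuous.abs).bddAbove
  refine csSup_le ((Set.nonempty_Icc.2 hab.le).image _) ?_
  rintro _ ⟨x, hx, rfl⟩
  exact abs_eval_iterate_derivative_le_on_Icc hab hp
    (fun y hy => le_csSup hbdd (Set.mem_image_of_mem _ hy)) k hx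
end

section
/- For all μ, ν, τ₁, τ₂, ξ₁, ξ₂, ξ₃ ∈ Fin 3, the following three-qubit trace identity holds for a dissipator acting on the third (maximally mixed) qubit: letting ρ₃ = ρ(τ₁) ⊗ ρ(τ₂) ⊗ (1/2), one has tr( ( (1⊗1⊗σ(μ))·ρ₃·(1⊗1⊗σ(ν)) − (1/2)·(1⊗1⊗(σ(ν)·σ(μ)))·ρ₃ − (1/2)·ρ₃·(1⊗1⊗(σ(ν)·σ(μ))) ) · (σ(ξ₁) ⊗ σ(ξ₂) ⊗ σ(ξ₃)) ) = 2·i · ε(μ,ν,ξ₃) · δ(τ₁,ξ₁) · δ(τ₂,ξ₂). -/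
open Matrix
open scoped Kronecker

/-- The Pauli matrices. -/
noncomputable def pauli : Fin 3 → Matrix (Fin 2) (Fin 2) ℂ
  | 0 => !![0, 1; 1, 0]
  | 1 => !![0, -Complex.I; Complex.I, 0]
  | 2 => !![1, 0; 0, -1]

/-- The Levi-Civita symbol on three indices in `Fin 3`. -/
def levi (i j k : Fin 3) : ℝ :=
  if (i.val, j.val, k.val) = (0, 1, 2) ∨ (i.val, j.val, k.val) = (1, 2, 0) ∨
      (i.val, j.val, k.val) = (2, 0, 1) then 1
  else if (i.val, j.val, k.val) = (0, 2, 1) ∨ (i.val, j.val, k.val) = (2, 1, 0) ∨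
      (i.val, j.val, k.val) = (1, 0, 2) then -1
  else 0

/-- The Kronecker delta. -/
def kdelta (i j : Fin 3) : ℝ := if i = j then 1 else 0

/-- The density matrix `(1 + σ τ)/2` of the `+1` eigenstate of the Pauli matrix `σ τ`. -/
noncomputable def plusState (τ : Fin 3) : Matrix (Fin 2) (Fin 2) ℂ :=
  (1 / 2 : ℂ) • (1 + pauli τ)

/-!
The dissipator acts only on the third tensor factor, so the trace splits into one factor per qubit.
On the maximally mixed state the two anticommutator terms combine to `b a`, and the dissipator is
proportional to the commutator `⁅σ μ, σ ν⁆ = 2i ∑ k, ε μ ν k σ k`. Orthogonality of the Pauli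
matrices under the trace then picks out the component `ξ₃` of the commutator, and on the first two
qubits the component of each eigenstate along `σ ξ₁` and `σ ξ₂`.
-/

/-- The `(a, b)` term `a ρ b - ½ (b a ρ + ρ b a)` of a Lindblad dissipator applied to the state `ρ`.
The operator `b` stands for the adjoint jump operator, so that no star structure is needed. -/
def dissipator (K : Type*) [Field K] {A : Type*} [Ring A] [Algebra K A] (a b ρ : A) : A :=
  a * ρ * b - (1 / 2 : K) • (b * a * ρ) - (1 / 2 : K) • (ρ * (b * a))

section Dissipator

variable {K : Type*} [Field K]

theorem dissipator_smul_one [NeZero (2 : K)] {A : Type*} [Ring A] [Algebra K A] (a b : A)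
    (c : K) : dissipator K a b (c • 1) = c • ⁅a, b⁆ := by
  have halves : (1 / 2 : K) • (b * a) + (1 / 2 : K) • (b * a) = b * a := by
    rw [← add_smul, add_halves, one_smul]
  calc dissipator K a b (c • 1)
      = c • (a * b - ((1 / 2 : K) • (b * a) + (1 / 2 : K) • (b * a))) := by
        simp only [dissipator, mul_smul_comm, smul_mul_assoc, mul_one, one_mul, smul_sub, smul_add,
          smul_comm c (1 / 2 : K), sub_sub]
    _ = c • ⁅a, b⁆ := by rw [halves, Ring.lie_def]

variable {m n : Type*} [Fintype m] [DecidableEq m] [Fintype n] [DecidableEq n]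

theorem dissipator_one_kronecker (a b τ : Matrix n n K) (ρ : Matrix m m K) :
    dissipator K ((1 : Matrix m m K) ⊗ₖ a) ((1 : Matrix m m K) ⊗ₖ b) (ρ ⊗ₖ τ) =
      ρ ⊗ₖ dissipator K a b τ := by
  simp only [dissipator, ← mul_kronecker_mul, one_mul, mul_one, sub_eq_add_neg, kronecker_add,
    ← neg_smul, kronecker_smul]

theorem trace_dissipator_one_kronecker_mul_kronecker [NeZero (2 : K)]
    (a b Y : Matrix n n K) (ρ X : Matrix m m K) (c : K) :
    trace (dissipator K ((1 : Matrix m m K) ⊗ₖ a) ((1 : Matrix m m K) ⊗ₖ b) (ρ ⊗ₖ (c • 1)) *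
        (X ⊗ₖ Y)) =
      c * trace (ρ * X) * trace (⁅a, b⁆ * Y) := by
  rw [dissipator_one_kronecker, dissipator_smul_one, ← mul_kronecker_mul, trace_kronecker,
    smul_mul, trace_smul, smul_eq_mul, mul_left_comm, mul_assoc]

end Dissipator

theorem kdelta_comm (i j : Fin 3) : kdelta i j = kdelta j i := by
  simp only [kdelta, eq_comm]

theorem levi_swap (i j k : Fin 3) : levi j i k = -levi i j k := by
  fin_cases i <;> fin_cases j <;> fin_cases k <;> simp [levi]

theorem pauli_mul_pauli (i j : Fin 3) :
    pauli i * pauli j = (kdelta i j : ℂ) • 1 + Complex.I • ∑ k, (levi i j k : ℂ) • pauli k := by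
  fin_cases i <;> fin_cases j <;> ext r s <;> fin_cases r <;> fin_cases s <;>
    simp [pauli, kdelta, levi, Fin.sum_univ_three]

theorem lie_pauli_pauli (i j : Fin 3) :
    ⁅pauli i, pauli j⁆ = (2 * Complex.I) • ∑ k, (levi i j k : ℂ) • pauli k := by
  rw [Ring.lie_def, pauli_mul_pauli i j, pauli_mul_pauli j i, kdelta_comm j i]
  simp only [levi_swap i j, Complex.ofReal_neg, neg_smul, Finset.sum_neg_distrib]
  module

theorem trace_pauli (i : Fin 3) : trace (pauli i) = 0 := by
  fin_cases i <;> simp [pauli, trace_fin_two]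

theorem trace_pauli_mul_pauli (i j : Fin 3) :
    trace (pauli i * pauli j) = 2 * (kdelta i j : ℂ) := by
  simp [pauli_mul_pauli, trace_sum, trace_pauli, mul_comm]

theorem trace_plusState_mul_pauli (τ ξ : Fin 3) :
    trace (plusState τ * pauli ξ) = (kdelta τ ξ : ℂ) := by
  rw [plusState, smul_mul, add_mul, one_mul, trace_smul, trace_add, trace_pauli,
    trace_pauli_mul_pauli, zero_add, smul_eq_mul, one_div, inv_mul_cancel_left₀ two_ne_zero]

theorem trace_lie_pauli_mul_pauli (i j k : Fin 3) :
    trace (⁅pauli i, pauli j⁆ * pauli k) = 4 * Complex.I * (levi i j k : ℂ) := by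
  have component : ∑ l, (levi i j l : ℂ) * (2 * (kdelta l k : ℂ)) = 2 * (levi i j k : ℂ) := by
    simp [kdelta, apply_ite, mul_comm]
  simp only [lie_pauli_pauli, smul_mul, Finset.sum_mul, trace_smul, trace_sum,
    trace_pauli_mul_pauli, smul_eq_mul, component]
  ring

/-- A dissipator on the third (maximally mixed) qubit traced against a three-site
Pauli observable isolates the dissipation coefficients. -/
theorem third_qubit_dissipator_trace_identity (μ ν τ₁ τ₂ ξ₁ ξ₂ ξ₃ : Fin 3) :
    let ρ₃ : Matrix ((Fin 2 × Fin 2) × Fin 2) ((Fin 2 × Fin 2) × Fin 2) ℂ :=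
      (plusState τ₁ ⊗ₖ plusState τ₂) ⊗ₖ ((1 / 2 : ℂ) • (1 : Matrix (Fin 2) (Fin 2) ℂ))
    let E : Fin 3 → Matrix ((Fin 2 × Fin 2) × Fin 2) ((Fin 2 × Fin 2) × Fin 2) ℂ :=
      fun κ => ((1 : Matrix (Fin 2) (Fin 2) ℂ) ⊗ₖ (1 : Matrix (Fin 2) (Fin 2) ℂ)) ⊗ₖ pauli κ
    Matrix.trace
        ((E μ * ρ₃ * E ν -
            (1 / 2 : ℂ) • ((((1 : Matrix (Fin 2) (Fin 2) ℂ) ⊗ₖ (1 : Matrix (Fin 2) (Fin 2) ℂ))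
                ⊗ₖ (pauli ν * pauli μ)) * ρ₃) -
            (1 / 2 : ℂ) • (ρ₃ * (((1 : Matrix (Fin 2) (Fin 2) ℂ) ⊗ₖ (1 : Matrix (Fin 2) (Fin 2) ℂ))
                ⊗ₖ (pauli ν * pauli μ)))) *
          ((pauli ξ₁ ⊗ₖ pauli ξ₂) ⊗ₖ pauli ξ₃)) =
      2 * Complex.I * (levi μ ν ξ₃ : ℂ) * (kdelta τ₁ ξ₁ : ℂ) * (kdelta τ₂ ξ₂ : ℂ) := by
  intro ρ₃ E
  have E_mul : ((1 : Matrix (Fin 2) (Fin 2) ℂ) ⊗ₖ (1 : Matrix (Fin 2) (Fin 2) ℂ)) ⊗ₖ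
      (pauli ν * pauli μ) = E ν * E μ := by
    simp only [E, ← mul_kronecker_mul, one_mul]
  have E_eq (κ : Fin 3) : E κ = (1 : Matrix (Fin 2 × Fin 2) (Fin 2 × Fin 2) ℂ) ⊗ₖ pauli κ := by
    simp only [E, one_kronecker_one]
  rw [E_mul]
  calc trace (dissipator ℂ (E μ) (E ν) ρ₃ * ((pauli ξ₁ ⊗ₖ pauli ξ₂) ⊗ₖ pauli ξ₃))
      = 1 / 2 * trace ((plusState τ₁ ⊗ₖ plusState τ₂) * (pauli ξ₁ ⊗ₖ pauli ξ₂)) *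
          trace (⁅pauli μ, pauli ν⁆ * pauli ξ₃) := by
        rw [E_eq, E_eq, trace_dissipator_one_kronecker_mul_kronecker]
    _ = 1 / 2 * (kdelta τ₁ ξ₁ * kdelta τ₂ ξ₂) * (4 * Complex.I * levi μ ν ξ₃) := by
        rw [← mul_kronecker_mul, trace_kronecker, trace_plusState_mul_pauli,
          trace_plusState_mul_pauli, trace_lie_pauli_mul_pauli]
    _ = 2 * Complex.I * levi μ ν ξ₃ * kdelta τ₁ ξ₁ * kdelta τ₂ ξ₂ := by ring
end
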